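/- arXiv:2003.00729 — 2 statements merged into one kernel-verified Lean document; each statement's English description precedes it below -/
import Mathlib

section
/- For all integers n, n_1, n_2 with 1 ≤ n_1 < n_2 ≤ n and n ≥ 9, the prime difference graph G_n contains a Hamilton path from n_1 to n_2, i.e., there exists a bijective sequence a_1, ..., a_n of {1,...,n} with a_1 = n_1, a_n = n_2, and |a_i - a_{i+1}| prime for each i. -/
/-- `a 0, ..., a (n-1)` is a Hamilton path of `{1,...,n}` with all consecutive
absolute differences prime. -/
def IsPrimeDiffHamPath (n : ℕ) (a : ℕ → ℤ) : Prop :=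
  Set.BijOn a (Set.Ico 0 n) (Set.Icc 1 (n : ℤ)) ∧
  (∀ i, i + 1 < n → ((a i - a (i + 1)).natAbs).Prime)

def tbl9 : List (List ℕ) := [
  [1011036, 1031707, 1030044, 963264, 1247772, 887484, 207936, 314652],
  [1421497, 459649, 1247798, 939385, 959875, 52921, 436465],
  [1421295, 1151397, 901449, 939183, 440475, 52719],
  [538564, 1141420, 907029, 369616, 129640],
  [939400, 912532, 52936, 436480],
  [939245, 714827, 52781],
  [204239, 292727],
  [12407]]

def tbl10 : List (List ℕ) := [
  [6445014, 6443803, 8528982, 2757894, 7486788, 5636310, 5759250, 317526, 2618790],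
  [8923272, 2758045, 7629792, 6906408, 5484696, 5763552, 1244400, 444768],
  [8528991, 2757903, 6906717, 5636319, 5759259, 317535, 2618799],
  [8498751, 6849436, 5442633, 5688400, 785416, 369616],
  [7355500, 6819196, 5467972, 1756780, 52936],
  [5636381, 5475173, 317597, 2618861],
  [5606141, 2675093, 287357],
  [1996446, 1756391],
  [2460773]]

def tbl11 : List (List ℕ) := [
  [53555328, 38670139, 53539632, 16548270, 45778752, 41438448, 32908176, 34581312, 7466400, 2668608],
  [36423096, 34696669, 37139712, 45777336, 35997720, 44823480, 34579896, 7464984, 2667192],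
  [51174807, 51633189, 45777645, 35998029, 44823789, 34580205, 7465293, 2667501],
  [19626880, 45780772, 28304896, 34133224, 4717912, 14774656, 15766096],
  [51025516, 41439748, 32909476, 33669484, 6773920, 1756780],
  [44132981, 40915157, 32807813, 10540661, 317597],
  [33637757, 34587797, 28002821, 2675093],
  [33909150, 11945179, 1996446],
  [11977842, 26101469],
  [2618885]]

def tbl12 : List (List ℕ) := [
  [220068612, 310916935, 218538576, 208180014, 222838272, 274664016, 215986320, 268940880, 207479376, 44789904, 16003152],
  [321332064, 287642575, 218384016, 222836856, 274735176, 269866104, 207588120, 44991960, 68312184, 95046072],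
  [343052151, 309830085, 222837165, 274735485, 269866413, 207588429, 44992269, 68312493, 95046381],
  [117018904, 222840292, 168953512, 204878632, 244327576, 192259480, 40720360, 65184088],
  [309798580, 274665316, 215987620, 268942180, 207480676, 44791204, 16004452],
  [306153077, 248638469, 197456837, 202016885, 40643501, 10540661],
  [269874005, 246547301, 197222837, 68320085, 95053973],
  [243855571, 207183955, 44895479, 15707731],
  [203454066, 152877403, 11977842],
  [67818810, 94997765],
  [67818958]]

def tbl13 : List (List ℕ) := [
  [1320417108, 2036474839, 1927992384, 1725855450, 1310304096, 1337021136, 1648411056, 1619196624, 1245528720, 269951760, 409873104, 570276432],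
  [1320411768, 1865501839, 1392123264, 1310302680, 1337092296, 1334937048, 1248390168, 1617112536, 1150179288, 269485080, 407789016],
  [2058313767, 1865154501, 1310302989, 1337092605, 1334937357, 1248390477, 1617112845, 1150179597, 269485389, 407789325],
  [715749952, 1310306116, 1015399408, 482236672, 1465970872, 1237550656, 1243469488, 88693312, 569047936],
  [1858979956, 1337022436, 1648412356, 1619197924, 1245530020, 269953060, 409874404, 570277732],
  [1858791461, 1647991877, 1295925701, 1613653061, 1244884037, 268747205, 96026693],
  [1841994581, 1492206773, 1168274165, 1217177429, 570851861, 68320085],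
  [1463133440, 1243103744, 63140930, 94246400, 564814175],
  [1476667795, 959626003, 63146268, 156769555],
  [1216676154, 365477131, 67818810],
  [406913754, 374120181],
  [434664112]]

def tbl14 : List (List ℕ) := [
  [11568640788, 12726171847, 7922470608, 11193011034, 8352739584, 7861816080, 8022553776, 8009622288, 7490341008, 9702675216, 6901075728, 1616910480, 2446734096],
  [7922502744, 12218849263, 11567951088, 8352738168, 8351168712, 11053560696, 3574230648, 9702877272, 7304657784, 7463988024, 411513720, 3393951864],
  [9730540815, 11190957957, 8352738477, 8351169021, 11053561005, 3574230957, 9702877581, 7304658093, 7463988333, 411514029, 3393952173],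
  [4266017320, 8352741604, 6140468776, 2893452448, 1023798568, 5072233000, 9699489544, 842959912, 1612840936, 140413864],
  [11190926452, 7861817380, 8022555076, 8009623588, 7490342308, 9702676516, 6901077028, 1616911780, 2446735396],
  [11153879717, 8022134597, 9890474117, 9715187525, 7473180101, 1619718341, 2459246405, 3421666373],
  [11053568597, 3574238549, 8951101493, 7304665685, 7463995925, 411521621, 3393959765],
  [4947608078, 2580160448, 4766489486, 7459396046, 1612723703, 2971166606],
  [8860006784, 5757756032, 378877634, 940617344, 3136408339],
  [9695190235, 4454127355, 917264268, 742269307],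
  [7300057818, 2708309467, 406913754],
  [2607984678, 2179462437],
  [5502867808]]

def tbl15 : List (List ℕ) := [
  [75658602780, 67317765175, 47535016464, 73313095578, 69407706528, 50116429008, 50107012272, 66321364176, 21445383888, 58217263632, 43827946704, 44783928144, 2469082320, 20363711184],
  [69411844824, 76357031311, 47534820432, 69407705112, 50116500168, 69387363096, 21446557944, 59329262616, 53704228632, 42648996120, 44817380376, 9676454424, 3458515992],
  [73325664303, 67314375333, 69407705421, 50116500477, 69387363405, 21446558253, 59329262925, 53704228941, 42648996429, 44817380685, 9676454733, 3458516301],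
  [25336728760, 69407708548, 36916802392, 44257915552, 48133165288, 59327525992, 46653143656, 58091328616, 44815643752, 9674717800, 3456779368],
  [67145747188, 50116430308, 50107013572, 66321365476, 21445385188, 58217264932, 43827948004, 44783929444, 2469083620, 20363712484],
  [67145558693, 47170904261, 48135330437, 48057741509, 44942053829, 58216059077, 41406462149, 9701470661, 14680412357],
  [66322546133, 66916609205, 59327824181, 46653441845, 58091626805, 44815941941, 9675015989, 3457077557],
  [48133048055, 59327408759, 46653026423, 58091211383, 44815526519, 9674600567, 3456662135],
  [2445798266, 33021520832, 26700278858, 44756371142, 5379937301, 13439571650],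
  [58171141424, 26724764144, 5503585634, 4453615856, 17514821371],
  [32279548243, 28567180075, 2192862636, 2244721099],
  [43966849062, 13626373339, 28394653710],
  [33017206854, 26529020613],
  [33017212192]]

def tbl16 : List (List ℕ) := [
  [458978886684, 439025152951, 416471068944, 458142187866, 285208922592, 416446230672, 300699001008, 416324178576, 128679347664, 355975575696, 322225371792, 255893976720, 268904282256, 58058726544, 20751095952],
  [453951616776, 403906591279, 285210095568, 285208921176, 402948347784, 283225994520, 269801298168, 288798400536, 355964564760, 279918270744, 348547380504, 268893271320, 58047715608, 20740085016],
  [438991784367, 439953887781, 285208921485, 402948348093, 283225994829, 269801298477, 288798400845, 355964565069, 279918271053, 348547380813, 268893271629, 58047715917, 20740085325],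
  [152020568056, 285208924612, 221500916536, 265547525728, 283025783272, 288796663912, 356056886632, 349746569320, 269034302056, 58309678696, 88532689000, 123179807848],
  [403886251444, 416446231972, 300699002308, 416324179876, 128679348964, 355975576996, 322225373092, 255893978020, 268904283556, 58058727844, 20751097252],
  [402874483109, 300698581829, 300642081413, 397928192837, 128672311109, 349303589573, 262967688005, 268703576645, 14814501701, 122182274885],
  [444595583957, 401539786421, 288796962101, 356057184821, 349746867509, 269034600245, 58309976885, 88532987189, 123180106037],
  [283025666039, 288796546679, 356056769399, 349746452087, 269034184823, 58309561463, 88532571767, 123179690615],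
  [14674789622, 198129118322, 160201673174, 268538226878, 268895542133, 80637429926, 83867751056],
  [578905082, 78943062080, 171403023050, 207278497142, 123304022597, 83867749730],
  [193677289472, 171403080464, 13157175842, 13468326608, 106931344171],
  [318960979411, 157307227051, 16249856652, 13076774635],
  [263655357510, 198103273075, 189749841870],
  [198103273158, 156824811909],
  [94616741488]]

def tbl17 : List (List ℕ) := [
  [2790803496348, 2767371277879, 2723709700656, 2423439547674, 1711260573408, 1711253527056, 2417690086704, 1699355967120, 1618807789008, 1732790403216, 2135787388560, 1679509624464, 2091284283024, 1613359627920, 348286293648, 124440510096],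
  [2753873320200, 2634150917935, 2498826410448, 1711260571992, 2639271391368, 2498678129688, 2236708663224, 1698154108440, 1732779392280, 2136340728600, 2098478824728, 1614205221144, 349857480984, 531195542808, 739078255896],
  [2651623564335, 2633950608165, 1711260572301, 2639271391677, 2498678129997, 2236708663533, 1698154108749, 1732779392589, 2136340728909, 2098478825037, 1614205221453, 349857481293, 531195543117, 739078256205],
  [921484570360, 1711260575428, 1326366084856, 2417690308432, 1804191848680, 1698152371816, 1732871714152, 1730078512744, 1617913756264, 2095777945192, 1490632455784, 349252762216, 528494663272],
  [2639723326132, 1711253528356, 2417690088004, 1699355968420, 1618807790308, 1732790404516, 2135787389860, 1679509625764, 2091284284324, 1613359629220, 348286294948, 124440511396],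
  [2423317508645, 2498677391813, 1804194013829, 2497945079237, 772076093765, 2135853461957, 1933352238533, 1535363868101, 1613425701317, 348352367045, 124506583493],
  [2667574638293, 2417240229557, 1698152670005, 1732872012341, 1730078810933, 1617914054453, 2095778243381, 1490632753973, 349253060405, 528494961461],
  [1804191731447, 1698152254583, 1732871596919, 1730078395511, 1617913639031, 2095777827959, 1490632338551, 349252644983, 528494546039],
  [2409238609013, 1732781663093, 2136342999413, 2098481095541, 1614207491957, 349859751797, 531197813621, 739080526709],
  [3473430518, 473658365810, 1028418138326, 1243670982878, 1612223140421, 503206498406, 483342161744],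
  [114809869178, 584994846656, 943843304906, 1243670988086, 157307217480, 483342160418],
  [1913765876480, 943843362320, 97499139938, 78460647824, 627492211627],
  [1913757150487, 1055179832107, 81758239884, 81553327051],
  [1581932177094, 567700448851, 1019313024078],
  [567700448934, 959504946885],
  [490704502000]]

def tblN : List (List (List ℕ)) :=
  [tbl9, tbl10, tbl11, tbl12, tbl13, tbl14, tbl15, tbl16, tbl17]

/-- Walk along a path coded by base 6 digits, keeping the visited vertices in a bit mask. -/
def walkB (n t : ℕ) : ℕ → ℕ → ℕ → ℕ → Bool
  | 0, x, _, v => Nat.beq x t && Nat.beq (v / 2 ^ x % 2) 0 && Nat.ble 1 x && Nat.ble x n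
  | k + 1, x, c, v =>
    Nat.beq (v / 2 ^ x % 2) 0 && Nat.ble 1 x && Nat.ble x n &&
    bif Nat.beq (c % 6) 0 then walkB n t k (x + 2) (c / 6) (Nat.lor v (2 ^ x))
    else bif Nat.beq (c % 6) 1 then walkB n t k (x + 3) (c / 6) (Nat.lor v (2 ^ x))
    else bif Nat.beq (c % 6) 2 then walkB n t k (x + 5) (c / 6) (Nat.lor v (2 ^ x))
    else bif Nat.beq (c % 6) 3 then
      Nat.ble 2 x && walkB n t k (x - 2) (c / 6) (Nat.lor v (2 ^ x))
    else bif Nat.beq (c % 6) 4 then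
      Nat.ble 3 x && walkB n t k (x - 3) (c / 6) (Nat.lor v (2 ^ x))
    else Nat.ble 5 x && walkB n t k (x - 5) (c / 6) (Nat.lor v (2 ^ x))

/-- Check the row of codes of the paths from `s` to `t`, `t + 1`, ..., `n`. -/
def rowB (n s : ℕ) : ℕ → List ℕ → Bool
  | t, [] => Nat.ble (n + 1) t
  | t, c :: r => walkB n t (n - 1) s c 0 && rowB n s (t + 1) r

def blkB (n : ℕ) : ℕ → List (List ℕ) → Bool
  | s, [] => Nat.ble n s
  | s, r :: rs => rowB n s (s + 1) r && blkB n (s + 1) rs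

def allB : ℕ → List (List (List ℕ)) → Bool
  | n, [] => Nat.ble 18 n
  | n, b :: bs => blkB n 1 b && allB (n + 1) bs

theorem allB_true : allB 9 tblN = true := by decide +kernel

theorem rowB_spec {n s : ℕ} {r : List ℕ} : ∀ {t₀ : ℕ}, rowB n s t₀ r = true →
    ∀ t, t₀ ≤ t → t ≤ n → ∃ c, walkB n t (n - 1) s c 0 = true := by
  induction r with
  | nil => intro t₀ h t h1 h2; simp [rowB] at h; omega
  | cons c r ih =>
    intro t₀ h t h1 h2
    simp only [rowB, Bool.and_eq_true] at h
    rcases Nat.eq_or_lt_of_le h1 with rfl | h1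
    · exact ⟨c, h.1⟩
    · exact ih h.2 t h1 h2

theorem blkB_spec {n : ℕ} {r : List (List ℕ)} : ∀ {s₀ : ℕ}, blkB n s₀ r = true →
    ∀ s t, s₀ ≤ s → s < t → t ≤ n → ∃ c, walkB n t (n - 1) s c 0 = true := by
  induction r with
  | nil => intro s₀ h s t h1 h2 h3; simp [blkB] at h; omega
  | cons c r ih =>
    intro s₀ h s t h1 h2 h3
    simp only [blkB, Bool.and_eq_true] at h
    rcases Nat.eq_or_lt_of_le h1 with rfl | h1
    · exact rowB_spec h.1 t h2 h3
    · exact ih h.2 s t h1 h2 h3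

theorem allB_spec {r : List (List (List ℕ))} : ∀ {n₀ : ℕ}, allB n₀ r = true →
    ∀ n s t, n₀ ≤ n → n ≤ 17 → 1 ≤ s → s < t → t ≤ n →
      ∃ c, walkB n t (n - 1) s c 0 = true := by
  induction r with
  | nil => intro n₀ h n s t h1 h2; simp [allB] at h; omega
  | cons c r ih =>
    intro n₀ h n s t h1 h2 h3 h4 h5
    simp only [allB, Bool.and_eq_true] at h
    rcases Nat.eq_or_lt_of_le h1 with rfl | h1
    · exact blkB_spec h.1 s t h3 h4 h5
    · exact ih h.2 n s t h1 h2 h3 h4 h5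

/-- Allowed steps: 2, 3, 5, and also 7 away from the extremes. -/
def StepR (n x y : ℕ) : Prop :=
  (x + 2 = y ∨ y + 2 = x ∨ x + 3 = y ∨ y + 3 = x ∨ x + 5 = y ∨ y + 5 = x) ∨
    ((x + 7 = y ∨ y + 7 = x) ∧ 1 < x ∧ 1 < y ∧ x < n ∧ y < n)

def PathP (n s t : ℕ) : Prop :=
  ∃ l : List ℕ, l.Nodup ∧ (∀ z, z ∈ l ↔ 1 ≤ z ∧ z ≤ n) ∧ l.IsChain (StepR n) ∧
    l.head? = some s ∧ l.getLast? = some t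

theorem walkB_step {n t k x c v : ℕ} (h : walkB n t (k + 1) x c v = true) :
    v / 2 ^ x % 2 = 0 ∧ 1 ≤ x ∧ x ≤ n ∧
      ∃ y c', StepR n x y ∧ walkB n t k y c' (Nat.lor v (2 ^ x)) = true := by
  unfold walkB at h
  simp only [Bool.and_eq_true, Nat.beq_eq, Nat.ble_eq, cond_eq_ite] at h
  obtain ⟨⟨⟨h1, h2⟩, h3⟩, h4⟩ := h
  refine ⟨h1, h2, h3, ?_⟩
  unfold StepR
  split_ifs at h4
  · exact ⟨_, _, by omega, h4⟩
  · exact ⟨_, _, by omega, h4⟩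
  · exact ⟨_, _, by omega, h4⟩
  all_goals
    simp only [Bool.and_eq_true, Nat.ble_eq] at h4
    exact ⟨_, _, by omega, h4.2⟩

theorem walkB_spec {n t : ℕ} (k : ℕ) : ∀ x c v, walkB n t k x c v = true →
    ∃ l : List ℕ, l.length = k + 1 ∧ l.Nodup ∧ (∀ z ∈ l, 1 ≤ z ∧ z ≤ n) ∧
      (∀ z ∈ l, v.testBit z = false) ∧ l.IsChain (StepR n) ∧
      l.head? = some x ∧ l.getLast? = some t := by
  induction k with
  | zero =>
    intro x c v h
    simp only [walkB, Bool.and_eq_true, Nat.beq_eq, Nat.ble_eq] at h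
    obtain ⟨⟨⟨rfl, h1⟩, h2⟩, h3⟩ := h
    refine ⟨[x], by simp, by simp, by simp [h2, h3], ?_, by simp, by simp, by simp⟩
    simp [Nat.testBit_eq_decide_div_mod_eq, h1]
  | succ k ih =>
    intro x c v h
    obtain ⟨h1, h2, h3, y, c', h4, h5⟩ := walkB_step h
    obtain ⟨l, i1, i2, i3, i4, i5, i6, i7⟩ := ih _ _ _ h5
    have hor : ∀ z, (Nat.lor v (2 ^ x)).testBit z = (v.testBit z || (2 ^ x).testBit z) :=
      fun z => Nat.testBit_or v (2 ^ x) z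
    refine ⟨x :: l, by simp [i1], ?_, ?_, ?_, ?_, by simp, ?_⟩
    · refine List.nodup_cons.mpr ⟨fun hx => ?_, i2⟩
      have := i4 x hx
      rw [hor, Nat.testBit_two_pow_self] at this
      simp at this
    · intro z hz
      rcases List.mem_cons.mp hz with rfl | hz
      · exact ⟨h2, h3⟩
      · exact i3 z hz
    · intro z hz
      rcases List.mem_cons.mp hz with rfl | hz
      · simp [Nat.testBit_eq_decide_div_mod_eq, h1]
      · have := i4 z hz
        rw [hor, Bool.or_eq_false_iff] at this
        exact this.1
    · rw [List.isChain_cons]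
      refine ⟨?_, i5⟩
      intro a ha
      rw [i6] at ha
      simp at ha
      subst ha
      exact h4
    · rw [List.getLast?_cons, i7]; rfl

theorem base_lt {n s t : ℕ} (h9 : 9 ≤ n) (h17 : n ≤ 17) (hs : 1 ≤ s) (hst : s < t) (ht : t ≤ n) :
    PathP n s t := by
  obtain ⟨c, hc⟩ := allB_spec allB_true n s t h9 h17 hs hst ht
  obtain ⟨l, i1, i2, i3, -, i5, i6, i7⟩ := walkB_spec _ _ _ _ hc
  have hF : l.toFinset = Finset.Icc 1 n := by
    refine Finset.eq_of_subset_of_card_le ?_ ?_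
    · intro z hz
      rw [Finset.mem_Icc]
      exact i3 z (List.mem_toFinset.mp hz)
    · rw [List.toFinset_card_of_nodup i2, i1, Nat.card_Icc]; omega
  refine ⟨l, i2, fun z => ?_, i5, i6, i7⟩
  rw [← List.mem_toFinset, hF, Finset.mem_Icc]

theorem StepR.symm {n x y : ℕ} (h : StepR n x y) : StepR n y x := by
  unfold StepR at *; omega

theorem PathP.symm {n s t : ℕ} (h : PathP n s t) : PathP n t s := by
  obtain ⟨l, h1, h2, h3, h4, h5⟩ := h
  refine ⟨l.reverse, List.nodup_reverse.mpr h1, by simpa using h2, ?_, by simpa using h5,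
    by simpa using h4⟩
  rw [List.isChain_reverse]
  exact h3.imp fun a b hab => hab.symm

theorem isChain_imp_mem {l : List ℕ} {r r' : ℕ → ℕ → Prop} (h : l.IsChain r)
    (hr : ∀ x ∈ l, ∀ y ∈ l, r x y → r' x y) : l.IsChain r' := by
  induction l with
  | nil => simp
  | cons x l ih =>
    cases l with
    | nil => simp
    | cons y l =>
      rw [List.isChain_cons_cons] at *
      exact ⟨hr _ (by simp) _ (by simp) h.1, ih h.2 fun a ha b hb => hr a (by simp [ha]) b
        (by simp [hb])⟩

/-- The image of a path under an injective map on the range. -/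
theorem map_aux {n N : ℕ} {f : ℕ → ℕ} {l : List ℕ} (h1 : l.Nodup)
    (h2 : ∀ z, z ∈ l ↔ 1 ≤ z ∧ z ≤ n) (h3 : l.IsChain (StepR n))
    (hf : ∀ x y, 1 ≤ x → x ≤ n → 1 ≤ y → y ≤ n → f x = f y → x = y)
    (hr : ∀ x y, 1 ≤ x → x ≤ n → 1 ≤ y → y ≤ n → StepR n x y → StepR N (f x) (f y)) :
    (l.map f).Nodup ∧ (l.map f).IsChain (StepR N) := by
  constructor
  · refine List.Nodup.map_on ?_ h1
    intro x hx y hy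
    rw [h2] at hx hy
    exact hf x y hx.1 hx.2 hy.1 hy.2
  · rw [List.isChain_map]
    refine isChain_imp_mem h3 ?_
    intro x hx y hy
    rw [h2] at hx hy
    exact hr x y hx.1 hx.2 hy.1 hy.2

theorem PathP.reflect {n s t : ℕ} (h : PathP n s t) : PathP n (n + 1 - s) (n + 1 - t) := by
  obtain ⟨l, h1, h2, h3, h4, h5⟩ := h
  obtain ⟨g1, g2⟩ := map_aux (N := n) (f := fun z => n + 1 - z) h1 h2 h3
    (by intros; omega) (by intros; unfold StepR at *; omega)
  refine ⟨_, g1, ?_, g2, by simp [h4], by simp [h5]⟩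
  intro z
  simp only [List.mem_map, h2]
  constructor
  · rintro ⟨a, ha, rfl⟩; omega
  · intro hz; exact ⟨n + 1 - z, by omega, by omega⟩

/-- A path on the block `k+1, ..., k+n`. -/
theorem PathP.shift {n s t : ℕ} (h : PathP n s t) (k N : ℕ) (hN : k + n ≤ N) :
    ∃ l : List ℕ, l.Nodup ∧ (∀ z, z ∈ l ↔ k + 1 ≤ z ∧ z ≤ k + n) ∧ l.IsChain (StepR N) ∧
    l.head? = some (k + s) ∧ l.getLast? = some (k + t) := by
  obtain ⟨l, h1, h2, h3, h4, h5⟩ := h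
  obtain ⟨g1, g2⟩ := map_aux (N := N) (f := fun z => k + z) h1 h2 h3
    (by intros; omega) (by intros; unfold StepR at *; omega)
  refine ⟨_, g1, ?_, g2, by simp [h4], by simp [h5]⟩
  intro z
  simp only [List.mem_map, h2]
  constructor
  · rintro ⟨a, ha, rfl⟩; omega
  · intro hz; exact ⟨z - k, by omega, by omega⟩

theorem PathP.join {m n s t x y : ℕ} (h : PathP m s x) (h' : PathP n y t)
    (hxy : StepR (m + n) x (m + y)) : PathP (m + n) s (m + t) := by
  obtain ⟨l, h1, h2, h3, h4, h5⟩ := h.shift 0 (m + n) (by omega)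
  obtain ⟨l', h1', h2', h3', h4', h5'⟩ := h'.shift m (m + n) (by omega)
  refine ⟨l ++ l', ?_, ?_, ?_, ?_, ?_⟩
  · rw [List.nodup_append']
    refine ⟨h1, h1', ?_⟩
    intro a ha hb
    rw [h2] at ha; rw [h2'] at hb; omega
  · intro z
    rw [List.mem_append, h2, h2']; omega
  · rw [List.isChain_append]
    refine ⟨h3, h3', ?_⟩
    intro a ha b hb
    rw [h5] at ha; rw [h4'] at hb
    simp at ha hb
    subst ha hb
    exact hxy
  · simp [List.head?_append, h4]
  · simp [List.getLast?_append, h5']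

theorem PathP.insert {m s t : ℕ} (hm : 9 ≤ m) (h : PathP m s t)
    (h9 : ∀ u v, 1 ≤ u → u ≤ 9 → 1 ≤ v → v ≤ 9 → u ≠ v → PathP 9 u v) : PathP (m + 9) s t := by
  obtain ⟨l, h1, h2, h3, h4, h5⟩ := h
  have key : ∃ L₁ L₂ x y, l = L₁ ++ L₂ ∧ L₁.getLast? = some x ∧ L₂.head? = some y ∧
      (x = m ∨ y = m) := by
    obtain ⟨p, q, rfl⟩ := List.append_of_mem ((h2 m).mpr (by omega))
    cases q with
    | cons y q => exact ⟨p ++ [m], y :: q, m, y, by simp, by simp, by simp, by simp⟩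
    | nil =>
      rcases hp : p.getLast? with _ | x
      · rw [List.getLast?_eq_none_iff] at hp
        subst hp
        have := (h2 1).mpr (by omega)
        simp at this; omega
      · exact ⟨p, [m], x, m, rfl, hp, by simp, by simp⟩
  obtain ⟨L₁, L₂, x, y, rfl, hx, hy, hxy⟩ := key
  have hR : StepR m x y := (List.isChain_append.mp h3).2.2 x hx y hy
  have hxm := (h2 x).mp (List.mem_append_left _ (List.mem_of_getLast? hx))
  have hym := (h2 y).mp (List.mem_append_right _ (List.mem_of_head? hy))
  have hblk : ∃ u v, 1 ≤ u ∧ u ≤ 9 ∧ 1 ≤ v ∧ v ≤ 9 ∧ u ≠ v ∧ StepR (m + 9) x (m + u) ∧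
      StepR (m + 9) (m + v) y := by
    unfold StepR at *
    rcases hxy with rfl | rfl
    · by_cases e : y + 2 = x
      · exact ⟨3, 1, by omega⟩
      · exact ⟨3, 2, by omega⟩
    · by_cases e : x + 2 = y
      · exact ⟨1, 3, by omega⟩
      · exact ⟨2, 3, by omega⟩
  obtain ⟨u, v, hu1, hu9, hv1, hv9, huv, hRu, hRv⟩ := hblk
  obtain ⟨l', g1, g2, g3, g4, g5⟩ := (h9 u v hu1 hu9 hv1 hv9 huv).shift m (m + 9) le_rfl
  have h3' : (L₁ ++ L₂).IsChain (StepR (m + 9)) := by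
    refine isChain_imp_mem h3 ?_
    intro a ha b hb hab
    rw [h2] at ha hb
    unfold StepR at *; omega
  rw [List.isChain_append] at h3'
  rw [List.nodup_append'] at h1
  have hmem : ∀ z, (z ∈ L₁ ∨ z ∈ L₂) ↔ 1 ≤ z ∧ z ≤ m := by
    intro z; rw [← List.mem_append]; exact h2 z
  refine ⟨L₁ ++ (l' ++ L₂), ?_, ?_, ?_, ?_, ?_⟩
  · rw [List.nodup_append', List.nodup_append']
    refine ⟨h1.1, ⟨g1, h1.2.1, ?_⟩, ?_⟩
    · intro a ha hb
      have := (hmem a).mp (Or.inr hb)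
      rw [g2] at ha; omega
    · intro a ha hb
      rcases List.mem_append.mp hb with hb | hb
      · have := (hmem a).mp (Or.inl ha)
        rw [g2] at hb; omega
      · exact h1.2.2 ha hb
  · intro z
    have := hmem z
    have := g2 z
    simp only [List.mem_append]
    constructor
    · rintro (h | h | h)
      · have := (hmem z).mp (Or.inl h); omega
      · have := (g2 z).mp h; omega
      · have := (hmem z).mp (Or.inr h); omega
    · intro hz
      by_cases hzm : z ≤ m
      · rcases (hmem z).mpr ⟨hz.1, hzm⟩ with h | h
        · exact Or.inl h
        · exact Or.inr (Or.inr h)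
      · exact Or.inr (Or.inl ((g2 z).mpr (by omega)))
  · rw [List.isChain_append, List.isChain_append]
    refine ⟨h3'.1, ⟨g3, h3'.2.1, ?_⟩, ?_⟩
    · intro a ha b hb
      rw [g5] at ha; rw [hy] at hb
      simp at ha hb
      subst ha hb
      exact hRv
    · intro a ha b hb
      rw [List.head?_append, g4] at hb; rw [hx] at ha
      simp at ha hb
      subst ha hb
      exact hRu
  · have : L₁ ≠ [] := by rintro rfl; simp at hx
    rw [List.head?_append_of_ne_nil _ this] at h4 ⊢
    exact h4
  · have : L₂ ≠ [] := by rintro rfl; simp at hy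
    rw [List.getLast?_append_of_ne_nil _ this] at h5
    rw [← List.append_assoc, List.getLast?_append_of_ne_nil _ this]
    exact h5

theorem nine_block (u v : ℕ) (hu1 : 1 ≤ u) (hu9 : u ≤ 9) (hv1 : 1 ≤ v) (hv9 : v ≤ 9)
    (h : u ≠ v) : PathP 9 u v := by
  rcases Nat.lt_or_gt_of_ne h with h | h
  · exact base_lt le_rfl (by omega) hu1 h hv9
  · exact (base_lt le_rfl (by omega) hv1 h hu9).symm

theorem pathP_all (n : ℕ) : ∀ s t, 9 ≤ n → 1 ≤ s → s < t → t ≤ n → PathP n s t := by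
  induction n using Nat.strong_induction_on with
  | _ n ih =>
    intro s t hn hs hst ht
    by_cases h17 : n ≤ 17
    · exact base_lt hn h17 hs hst ht
    obtain ⟨m, rfl⟩ : ∃ m, n = m + 9 := ⟨n - 9, by omega⟩
    by_cases ht' : t ≤ m
    · exact (ih m (by omega) s t (by omega) hs hst ht').insert (by omega) nine_block
    by_cases hs' : 10 ≤ s
    · have h := ((ih m (by omega) (m + 9 + 1 - t) (m + 9 + 1 - s) (by omega) (by omega) (by omega)
        (by omega)).insert (by omega) nine_block).reflect.symm
      rwa [show m + 9 + 1 - (m + 9 + 1 - t) = t by omega,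
        show m + 9 + 1 - (m + 9 + 1 - s) = s by omega] at h
    · have hxy : ∃ x y, 1 ≤ x ∧ x ≤ 9 ∧ x ≠ s ∧ 1 ≤ y ∧ y ≤ m ∧ y ≠ t - 9 ∧
          StepR (9 + m) x (9 + y) := by
        unfold StepR
        by_cases e : s = 9
        · by_cases e' : t = 10
          · exact ⟨8, 2, by omega⟩
          · exact ⟨8, 1, by omega⟩
        · by_cases e' : t = 11
          · exact ⟨9, 3, by omega⟩
          · exact ⟨9, 2, by omega⟩
      obtain ⟨x, y, hx1, hx9, hxs, hy1, hym, hyt, hR⟩ := hxy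
      have hP : PathP m y (t - 9) := by
        rcases Nat.lt_or_gt_of_ne hyt with h | h
        · exact ih m (by omega) _ _ (by omega) hy1 h (by omega)
        · exact (ih m (by omega) _ _ (by omega) (by omega) h hym).symm
      have h := (nine_block s x hs (by omega) hx1 hx9 hxs.symm).join hP hR
      rwa [show 9 + (t - 9) = t by omega, Nat.add_comm] at h

theorem prime_diff_ham_path_any_endpoints (n n₁ n₂ : ℕ) (hn : 9 ≤ n)
    (h1 : 1 ≤ n₁) (h12 : n₁ < n₂) (h2 : n₂ ≤ n) :
    ∃ a : ℕ → ℤ, IsPrimeDiffHamPath n a ∧ a 0 = n₁ ∧ a (n - 1) = n₂ := by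
  obtain ⟨l, g1, g2, g3, g4, g5⟩ := pathP_all n n₁ n₂ hn h1 h12 h2
  have hlen : l.length = n := by
    have h : l.toFinset = Finset.Icc 1 n := by
      ext z; simp [g2]
    have := List.toFinset_card_of_nodup g1
    rw [h] at this
    simpa using this.symm
  have hget : ∀ i (hi : i < l.length), l.getD i 0 = l[i] := fun i hi => by
    simp [List.getD_eq_getElem?_getD, hi]
  refine ⟨fun i => (l.getD i 0 : ℕ), ⟨⟨?_, ?_, ?_⟩, ?_⟩, ?_, ?_⟩
  · intro i hi
    have hi' : i < l.length := by rw [hlen]; exact hi.2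
    have := (g2 _).mp (List.getElem_mem hi')
    simp only [hget i hi', Set.mem_Icc]
    omega
  · intro i hi j hj hij
    have hi' : i < l.length := by rw [hlen]; exact hi.2
    have hj' : j < l.length := by rw [hlen]; exact hj.2
    simp only [hget i hi', hget j hj'] at hij
    exact (List.Nodup.getElem_inj_iff g1).mp (by exact_mod_cast hij)
  · intro z hz
    obtain ⟨i, hi, e⟩ := List.mem_iff_getElem.mp ((g2 z.toNat).mpr
      (by have := hz.1; have := hz.2; omega))
    refine ⟨i, ⟨Nat.zero_le _, by omega⟩, ?_⟩
    simp only [hget i hi, e]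
    have := hz.1; omega
  · intro i hi
    have hs := List.isChain_iff_getElem.mp g3 i (by omega)
    simp only [hget i (by omega), hget (i + 1) (by omega)]
    have : ((l[i] : ℤ) - (l[i + 1] : ℤ)).natAbs ∈ [2, 3, 5, 7] := by
      simp only [List.mem_cons, List.not_mem_nil, or_false]
      unfold StepR at hs; omega
    generalize ((l[i] : ℤ) - (l[i + 1] : ℤ)).natAbs = k at this
    simp only [List.mem_cons, List.not_mem_nil, or_false] at this
    rcases this with rfl | rfl | rfl | rfl <;> norm_num
  · rw [List.head?_eq_getElem?] at g4
    simp [List.getD_eq_getElem?_getD, g4]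
  · rw [List.getLast?_eq_getElem?, hlen] at g5
    simp [List.getD_eq_getElem?_getD, g5]
end

section
/- For every integer n ≥ 7 and every list of integers ℓ_1, ..., ℓ_k with each ℓ_i ≥ 3 and ℓ_1 + ... + ℓ_k = n, the prime difference graph G_n admits a 2-factor whose cycles have lengths exactly ℓ_1, ..., ℓ_k. -/
/-- The finite set `V ⊆ ℤ` carries a cycle all of whose edges have prime difference. -/
def HasPrimeDiffCycle (V : Finset ℤ) : Prop :=
  ∃ c : ℕ → ℤ, Set.BijOn c (Set.Ico 0 V.card) ↑V ∧
    (∀ i, i + 1 < V.card → ((c i - c (i + 1)).natAbs).Prime) ∧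
    ((c (V.card - 1) - c 0).natAbs).Prime

namespace PDG

/-- Difference is a small prime. -/
def R (a b : ℤ) : Prop := (a - b).natAbs ∈ [2, 3, 5, 7, 11, 13]

instance : DecidableRel R := fun a b => by unfold R; infer_instance

theorem R_symm {a b : ℤ} (h : R a b) : R b a := by
  unfold R at *
  rwa [← Int.natAbs_neg, neg_sub]

theorem R_prime {a b : ℤ} (h : R a b) : ((a - b).natAbs).Prime := by
  unfold R at h
  simp only [List.mem_cons, List.not_mem_nil, or_false] at h
  rcases h with h | h | h | h | h | h <;> rw [h] <;> norm_num

/-- A list is a cycle for `R`. -/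
def Cyc (l : List ℤ) : Prop := l.IsChain R ∧ R (l.getLast?.getD 0) (l.head?.getD 0)

instance (l : List ℤ) : Decidable (Cyc l) := by unfold Cyc; infer_instance

/-- The list `1, ..., n`. -/
def I (n : ℕ) : List ℤ := (List.range n).map (fun i : ℕ => (i : ℤ) + 1)

/-- Lengths in `s` are realizable on an interval. -/
def Good (s : Multiset ℕ) : Prop := ∃ L : List (List ℤ),
  ((L.map List.length : List ℕ) : Multiset ℕ) = s ∧ L.flatten.Perm (I s.sum) ∧ ∀ l ∈ L, Cyc l

/-- Lengths `s` together with a cycle of length `m` through the edge `N-2, N`. -/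
def Ext (s : Multiset ℕ) (m : ℕ) : Prop := ∃ (l : List ℤ) (L : List (List ℤ)),
  l.length = m ∧ ((L.map List.length : List ℕ) : Multiset ℕ) = s ∧
  l.head? = some (((s.sum + m : ℕ) : ℤ) - 2) ∧ l.getLast? = some ((s.sum + m : ℕ) : ℤ) ∧
  (l ++ L.flatten).Perm (I (s.sum + m)) ∧ l.IsChain R ∧ ∀ l ∈ L, Cyc l

theorem Ext.good {s : Multiset ℕ} {m : ℕ} (h : Ext s m) : Good (m ::ₘ s) := by
  obtain ⟨l, L, h1, h2, h3, h4, h5, h6, h7⟩ := h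
  refine ⟨l :: L, ?_, ?_, ?_⟩
  · rw [List.map_cons, ← Multiset.cons_coe, h1, h2]
  · rw [Multiset.sum_cons, add_comm]; simpa using h5
  · intro x hx
    rcases List.mem_cons.1 hx with rfl | hx
    · refine ⟨h6, ?_⟩
      rw [h3, h4]; simp [R]
    · exact h7 x hx

theorem I_add (a b : ℕ) : I (a + b) = I a ++ (I b).map (fun x => x + (a : ℤ)) := by
  simp only [I, List.range_add, List.map_append, List.map_map]
  congr 1
  apply List.map_congr_left
  intro x _
  simp; ring

theorem Ext.step {s : Multiset ℕ} {m : ℕ} (h : Ext s m) : Ext s (m + 5) := by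
  obtain ⟨l, L, h1, h2, h3, h4, h5, h6, h7⟩ := h
  generalize hN : s.sum + m = N at *
  have hl : l ≠ [] := by rintro rfl; simp at h3
  refine ⟨((N : ℤ) + 3) :: (l.reverse ++ [(N : ℤ) + 1, N + 4, N + 2, N + 5]), L, ?_, h2, ?_, ?_, ?_, ?_, h7⟩
  · simp [h1]
  · rw [← add_assoc, hN]; simp; ring
  · rw [← add_assoc, hN, ← List.cons_append, List.getLast?_append]; simp
  · rw [← add_assoc, hN, I_add]
    have e : (I 5).map (fun x => x + (N : ℤ)) = [(N : ℤ) + 1, N + 2, N + 3, N + 4, N + 5] := by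
      simp [I, List.range_succ]; refine ⟨?_, ?_, ?_, ?_, ?_⟩ <;> ring
    rw [e]
    rw [← Multiset.coe_eq_coe] at h5 ⊢
    rw [← Multiset.coe_add] at h5 
    rw [← Multiset.coe_add (I N), ← h5]
    simp only [← Multiset.coe_add, ← Multiset.cons_coe, Multiset.coe_reverse]
    simp only [← Multiset.singleton_add, Multiset.coe_nil]
    abel
  · rw [List.isChain_cons, List.isChain_append]
    refine ⟨?_, ?_, ?_, ?_⟩
    · intro y hy
      have : y = N := by
        rw [List.head?_append, List.head?_reverse, h4] at hy
        simpa using hy.symm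
      subst this; simp [R]
    · rw [List.isChain_reverse]
      exact h6.imp (fun _ _ h => R_symm h)
    · simp [R]
    · intro x hx y hy
      rw [List.getLast?_reverse, h3] at hx
      simp at hx hy
      subst hx hy
      simp [R]; ring_nf; decide

theorem ext_all {s : Multiset ℕ} (h5 : Ext s 5) (h6 : Ext s 6) (h7 : Ext s 7) (h8 : Ext s 8)
    (h9 : Ext s 9) : ∀ m, 5 ≤ m → Ext s m := by
  intro m
  induction m using Nat.strong_induction_on with
  | _ m ih =>
    intro hm
    by_cases h : m < 10
    · interval_cases m <;> assumption
    · have := (ih (m - 5) (by omega) (by omega)).step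
      rwa [Nat.sub_add_cancel hm] at this

theorem Good.zero : Good 0 := ⟨[], rfl, by simp [I], by simp⟩

theorem Cyc.shift {l : List ℤ} (h : Cyc l) (hl : l ≠ []) (a : ℤ) :
    Cyc (l.map (fun x => x + a)) := by
  obtain ⟨h1, h2⟩ := h
  refine ⟨?_, ?_⟩
  · rw [List.isChain_map]
    exact h1.imp (fun x y h => by simpa [R] using h)
  · rw [List.getLast?_map, List.head?_map]
    rw [List.getLast?_eq_some_getLast hl, List.head?_eq_some_head hl] at h2 ⊢
    simpa [R] using h2

theorem Cyc.ne_nil {l : List ℤ} (h : Cyc l) : l ≠ [] := by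
  rintro rfl
  exact absurd h.2 (by decide)

theorem Good.add {s t : Multiset ℕ} (hs : Good s) (ht : Good t) : Good (s + t) := by
  obtain ⟨L, a1, a2, a3⟩ := hs
  obtain ⟨K, b1, b2, b3⟩ := ht
  refine ⟨L ++ K.map (fun l => l.map (fun x => x + (s.sum : ℤ))), ?_, ?_, ?_⟩
  · rw [List.map_append, ← Multiset.coe_add, a1, List.map_map, ← b1]
    congr 2
    apply List.map_congr_left
    simp
  · rw [Multiset.sum_add, I_add, List.flatten_append, ← List.map_flatten]
    exact a2.append (b2.map _)
  · intro l hl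
    rcases List.mem_append.1 hl with h | h
    · exact a3 l h
    · obtain ⟨k, hk, rfl⟩ := List.mem_map.1 h
      exact (b3 k hk).shift (b3 k hk).ne_nil _

theorem ext_0 : ∀ m, 5 ≤ m → Ext 0 m := by
  apply ext_all
  · exact ⟨[3, 1, 4, 2, 5], [], by decide⟩
  · exact ⟨[4, 2, 5, 3, 1, 6], [], by decide⟩
  · exact ⟨[5, 3, 1, 6, 4, 2, 7], [], by decide⟩
  · exact ⟨[6, 1, 4, 2, 7, 5, 3, 8], [], by decide⟩
  · exact ⟨[7, 2, 4, 1, 3, 5, 8, 6, 9], [], by decide⟩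

theorem ext_3 : ∀ m, 5 ≤ m → Ext {3} m := by
  apply ext_all
  · exact ⟨[6, 1, 3, 5, 8], [[2, 4, 7]], by decide⟩
  · exact ⟨[7, 2, 4, 1, 6, 9], [[3, 5, 8]], by decide⟩
  · exact ⟨[8, 1, 3, 5, 2, 7, 10], [[4, 6, 9]], by decide⟩
  · exact ⟨[9, 2, 4, 1, 3, 6, 8, 11], [[5, 7, 10]], by decide⟩
  · exact ⟨[10, 3, 1, 4, 2, 5, 7, 9, 12], [[6, 8, 11]], by decide⟩

theorem ext_33 : ∀ m, 5 ≤ m → Ext {3, 3} m := by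
  apply ext_all
  · exact ⟨[9, 2, 4, 6, 11], [[1, 3, 8], [5, 7, 10]], by decide⟩
  · exact ⟨[10, 3, 1, 4, 9, 12], [[2, 5, 7], [6, 8, 11]], by decide⟩
  · exact ⟨[11, 4, 1, 3, 6, 8, 13], [[2, 7, 9], [5, 10, 12]], by decide⟩
  · exact ⟨[12, 1, 3, 5, 2, 4, 7, 14], [[6, 9, 11], [8, 10, 13]], by decide⟩
  · exact ⟨[13, 2, 4, 1, 3, 5, 7, 10, 15], [[6, 8, 11], [9, 12, 14]], by decide⟩

theorem ext_4 : ∀ m, 5 ≤ m → Ext {4} m := by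
  apply ext_all
  · exact ⟨[7, 2, 4, 6, 9], [[1, 3, 5, 8]], by decide⟩
  · exact ⟨[8, 1, 3, 5, 7, 10], [[2, 4, 6, 9]], by decide⟩
  · exact ⟨[9, 2, 4, 1, 3, 6, 11], [[5, 7, 10, 8]], by decide⟩
  · exact ⟨[10, 3, 1, 4, 2, 5, 7, 12], [[6, 8, 11, 9]], by decide⟩
  · exact ⟨[11, 4, 1, 3, 5, 10, 8, 6, 13], [[2, 7, 12, 9]], by decide⟩

theorem good_44 : Good ((0 : ℕ) • {3} + (2 : ℕ) • {4}) :=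
  ⟨[[1, 3, 6, 8], [2, 4, 7, 5]], by decide⟩

theorem good_444 : Good ((0 : ℕ) • {3} + (3 : ℕ) • {4}) :=
  ⟨[[1, 3, 6, 8], [2, 4, 11, 9], [5, 7, 10, 12]], by decide⟩

theorem good_333 : Good ((3 : ℕ) • {3} + (0 : ℕ) • {4}) :=
  ⟨[[1, 3, 8], [2, 5, 7], [4, 6, 9]], by decide⟩

theorem good_3333 : Good ((4 : ℕ) • {3} + (0 : ℕ) • {4}) :=
  ⟨[[1, 3, 8], [2, 4, 7], [5, 10, 12], [6, 9, 11]], by decide⟩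

theorem good_33333 : Good ((5 : ℕ) • {3} + (0 : ℕ) • {4}) :=
  ⟨[[1, 3, 6], [2, 4, 7], [5, 10, 12], [8, 13, 15], [9, 11, 14]], by decide⟩

theorem good_34 : Good ((1 : ℕ) • {3} + (1 : ℕ) • {4}) :=
  ⟨[[1, 3, 6], [2, 4, 7, 5]], by decide⟩

theorem good_334 : Good ((2 : ℕ) • {3} + (1 : ℕ) • {4}) :=
  ⟨[[1, 3, 6], [2, 4, 9], [5, 7, 10, 8]], by decide⟩

theorem good_3334 : Good ((3 : ℕ) • {3} + (1 : ℕ) • {4}) :=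
  ⟨[[1, 3, 6], [2, 4, 9], [5, 7, 12], [8, 10, 13, 11]], by decide⟩

theorem good_344 : Good ((1 : ℕ) • {3} + (2 : ℕ) • {4}) :=
  ⟨[[1, 3, 6], [2, 4, 11, 9], [5, 7, 10, 8]], by decide⟩

theorem good_small (a b : ℕ) (h : ¬ (a = 1 ∧ b = 0)) (h' : ¬ (a = 2 ∧ b = 0))
    (h'' : ¬ (a = 0 ∧ b = 1)) : Good (a • {3} + b • {4}) := by
  induction hn : a + b using Nat.strong_induction_on generalizing a b with
  | _ n ih =>
    have key : ∀ c d : ℕ, Good (c • {3} + d • {4}) → c ≤ a → d ≤ b → 0 < c + d →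
        ¬ (a - c = 1 ∧ b - d = 0) → ¬ (a - c = 2 ∧ b - d = 0) → ¬ (a - c = 0 ∧ b - d = 1) →
        Good (a • {3} + b • {4}) := by
      intro c d hg hc hd hp e1 e2 e3
      have := hg.add (ih (a - c + (b - d)) (by omega) (a - c) (b - d) e1 e2 e3 rfl)
      have e : (c • {3} + d • {4} + ((a - c) • {3} + (b - d) • {4}) : Multiset ℕ)
          = (c + (a - c)) • {3} + (d + (b - d)) • {4} := by
        simp only [add_smul]; abel
      rw [e, Nat.add_sub_cancel' hc, Nat.add_sub_cancel' hd] at this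
      exact this
    by_cases h0 : a = 0 ∧ b = 0
    · obtain ⟨rfl, rfl⟩ := h0
      simpa using Good.zero
    by_cases c1 : 3 ≤ a ∧ ¬ (a - 3 = 1 ∧ b = 0) ∧ ¬ (a - 3 = 2 ∧ b = 0) ∧ ¬ (a - 3 = 0 ∧ b = 1)
    · exact key 3 0 good_333 (by omega) (by omega) (by omega) (by omega) (by omega) (by omega)
    by_cases c2 : 2 ≤ b ∧ ¬ (a = 1 ∧ b - 2 = 0) ∧ ¬ (a = 2 ∧ b - 2 = 0) ∧ ¬ (a = 0 ∧ b - 2 = 1)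
    · exact key 0 2 good_44 (by omega) (by omega) (by omega) (by omega) (by omega) (by omega)
    by_cases c3 : a = 2 ∧ b = 2
    · exact key 1 1 good_34 (by omega) (by omega) (by omega) (by omega) (by omega) (by omega)
    have : (a = 4 ∧ b = 0) ∨ (a = 5 ∧ b = 0) ∨ (a = 3 ∧ b = 1) ∨ (a = 1 ∧ b = 2) ∨
        (a = 0 ∧ b = 3) ∨ (a = 1 ∧ b = 1) ∨ (a = 2 ∧ b = 1) := by omega
    rcases this with ⟨rfl, rfl⟩ | ⟨rfl, rfl⟩ | ⟨rfl, rfl⟩ | ⟨rfl, rfl⟩ | ⟨rfl, rfl⟩ | ⟨rfl, rfl⟩ |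
      ⟨rfl, rfl⟩
    · exact good_3333
    · exact good_33333
    · exact good_3334
    · exact good_344
    · exact good_444
    · exact good_34
    · exact good_334

theorem good_big (t : Multiset ℕ) (h : ∀ x ∈ t, 5 ≤ x) : Good t := by
  induction t using Multiset.induction_on with
  | empty => exact Good.zero
  | cons a t ih =>
    rw [← Multiset.singleton_add]
    refine Good.add ?_ (ih fun x hx => h x (Multiset.mem_cons_of_mem hx))
    exact (ext_0 a (h a (Multiset.mem_cons_self a t))).good

theorem decomp (s : Multiset ℕ) (h : ∀ x ∈ s, 3 ≤ x) :
    ∃ (a b : ℕ) (t : Multiset ℕ), s = a • {3} + b • {4} + t ∧ ∀ x ∈ t, 5 ≤ x := by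
  induction s using Multiset.induction_on with
  | empty => exact ⟨0, 0, 0, by simp, by simp⟩
  | cons x s ih =>
    obtain ⟨a, b, t, e, ht⟩ := ih fun x hx => h x (Multiset.mem_cons_of_mem hx)
    have hx := h x (Multiset.mem_cons_self x s)
    by_cases h3 : x = 3
    · refine ⟨a + 1, b, t, ?_, ht⟩
      rw [e, h3, ← Multiset.singleton_add, add_smul, one_smul]; abel
    by_cases h4 : x = 4
    · refine ⟨a, b + 1, t, ?_, ht⟩
      rw [e, h4, ← Multiset.singleton_add, add_smul, one_smul]; abel
    · refine ⟨a, b, x ::ₘ t, ?_, ?_⟩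
      · rw [e, ← Multiset.singleton_add, ← Multiset.singleton_add]; abel
      · intro y hy
        rcases Multiset.mem_cons.1 hy with rfl | hy
        · omega
        · exact ht y hy

theorem good_all (s : Multiset ℕ) (h : ∀ x ∈ s, 3 ≤ x) (h7 : 7 ≤ s.sum) : Good s := by
  obtain ⟨a, b, t, rfl, ht⟩ := decomp s h
  by_cases hex : (a = 1 ∧ b = 0) ∨ (a = 2 ∧ b = 0) ∨ (a = 0 ∧ b = 1)
  · induction t using Multiset.induction_on with
    | empty =>
      exfalso
      rcases hex with ⟨rfl, rfl⟩ | ⟨rfl, rfl⟩ | ⟨rfl, rfl⟩ <;> simp [Multiset.sum_nsmul] at h7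
    | cons m t _ =>
      have hm := ht m (Multiset.mem_cons_self m t)
      have hg := good_big t fun x hx => ht x (Multiset.mem_cons_of_mem hx)
      have key : ∀ u, Ext u m → Good (u + m ::ₘ t) := by
        intro u hu
        have := hu.good.add hg
        rwa [Multiset.cons_add, ← Multiset.add_cons] at this
      rcases hex with ⟨rfl, rfl⟩ | ⟨rfl, rfl⟩ | ⟨rfl, rfl⟩
      · exact key _ (ext_3 m hm)
      · exact key _ (ext_33 m hm)
      · exact key _ (ext_4 m hm)
  · exact (good_small a b (by tauto) (by tauto) (by tauto)).add (good_big t ht)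

theorem perm_lift {l l' : List ℕ} (h : l.Perm l') : ∀ L : List (List ℤ), L.map List.length = l →
    ∃ L' : List (List ℤ), L'.Perm L ∧ L'.map List.length = l' := by
  induction h with
  | nil => intro L hL; exact ⟨L, .refl _, hL⟩
  | cons x _ ih =>
    intro L hL
    cases L with
    | nil => simp at hL
    | cons y L =>
      rw [List.map_cons, List.cons.injEq] at hL
      obtain ⟨L', p, e⟩ := ih L hL.2
      exact ⟨y :: L', p.cons y, by simp [hL.1, e]⟩
  | swap x y l =>
    intro L hL
    match L, hL with
    | p :: q :: L, hL =>
      simp only [List.map_cons, List.cons.injEq] at hL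
      exact ⟨q :: p :: L, .swap _ _ _, by simp [hL]⟩
  | trans _ _ ih1 ih2 =>
    intro L hL
    obtain ⟨L1, p1, e1⟩ := ih1 L hL
    obtain ⟨L2, p2, e2⟩ := ih2 L1 e1
    exact ⟨L2, p2.trans p1, e2⟩

theorem cyc_has {l : List ℤ} (h : Cyc l) (hd : l.Nodup) : HasPrimeDiffCycle l.toFinset := by
  have hn := h.ne_nil
  have hp : 0 < l.length := List.length_pos_of_ne_nil hn
  unfold HasPrimeDiffCycle
  rw [List.toFinset_card_of_nodup hd]
  refine ⟨fun i => l.getD i 0, ⟨?_, ?_, ?_⟩, ?_, ?_⟩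
  · intro i hi
    have hi : i < l.length := hi.2
    simp [hi]
  · intro i hi j hj e
    have hi : i < l.length := hi.2
    have hj : j < l.length := hj.2
    simp only [List.getD_eq_getElem _ _ hi, List.getD_eq_getElem _ _ hj] at e
    exact (hd.getElem_inj_iff).1 e
  · intro x hx
    have hx : x ∈ l := by simpa using hx
    obtain ⟨i, hi, rfl⟩ := List.getElem_of_mem hx
    exact ⟨i, ⟨Nat.zero_le _, hi⟩, List.getD_eq_getElem _ _ hi⟩
  · intro i hi
    simp only [List.getD_eq_getElem _ _ hi, List.getD_eq_getElem _ _ (Nat.lt_of_succ_lt hi)]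
    exact R_prime (List.isChain_iff_getElem.1 h.1 i hi)
  · have h2 := R_prime h.2
    rw [List.getLast?_eq_getElem?, List.head?_eq_getElem?] at h2
    simpa [List.getD_eq_getElem?_getD] using h2

end PDG

/-- `G_n` admits a 2-factor with prescribed cycle lengths, each at least 3 (any 2-factor of `K_n`). -/
theorem prime_diff_any_two_factor (n k : ℕ) (hn : 7 ≤ n)
    (ns : Fin k → ℕ) (hns : ∀ i, 3 ≤ ns i) (hsum : ∑ i, ns i = n) :
    ∃ V : Fin k → Finset ℤ,
      (∀ i j, i ≠ j → Disjoint (V i) (V j)) ∧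
      (Finset.univ.biUnion V = Finset.Icc (1 : ℤ) n) ∧
      (∀ i, (V i).card = ns i) ∧
      (∀ i, HasPrimeDiffCycle (V i)) := by
  have hs : ((List.ofFn ns : List ℕ) : Multiset ℕ).sum = n := by
    rw [Multiset.sum_coe, List.sum_ofFn, hsum]
  obtain ⟨L0, e0, p0, c0⟩ := PDG.good_all (List.ofFn ns : List ℕ)
    (by intro x hx
        rw [Multiset.mem_coe, List.mem_ofFn] at hx
        obtain ⟨i, rfl⟩ := hx
        exact hns i) (by rw [hs]; exact hn)
  rw [hs] at p0
  obtain ⟨L, pL, eL⟩ := PDG.perm_lift (Multiset.coe_eq_coe.1 e0) L0 rfl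
  have p : L.flatten.Perm (PDG.I n) := pL.flatten.trans p0
  have c : ∀ l ∈ L, PDG.Cyc l := fun l hl => c0 l (pL.subset hl)
  have hlen : L.length = k := by
    have := congrArg List.length eL
    simpa using this
  have hnd : L.flatten.Nodup := by
    rw [p.nodup_iff]
    unfold PDG.I
    refine List.Nodup.map ?_ List.nodup_range
    intro a b h
    simpa using h
  rw [List.nodup_flatten] at hnd
  subst hlen
  have hget : ∀ i : Fin L.length, (L[i]).length = ns i := by
    intro i
    have := List.getElem_of_eq eL (i := i) (by simp)
    simpa using this
  refine ⟨fun i => (L[i]).toFinset, ?_, ?_, ?_, ?_⟩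
  · intro i j hij
    have hpw := List.pairwise_iff_getElem.1 hnd.2
    rw [List.disjoint_toFinset_iff_disjoint]
    rcases lt_or_gt_of_ne hij with h | h
    · exact hpw i j i.2 j.2 h
    · exact (hpw j i j.2 i.2 h).symm
  · ext x
    have hx : x ∈ L.flatten ↔ x ∈ PDG.I n := p.mem_iff
    have h1 : x ∈ PDG.I n ↔ x ∈ Finset.Icc (1 : ℤ) n := by
      simp only [PDG.I, List.mem_map, List.mem_range, Finset.mem_Icc]
      constructor
      · rintro ⟨i, hi, rfl⟩; omega
      · rintro ⟨h1, h2⟩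
        exact ⟨(x - 1).toNat, by omega, by omega⟩
    rw [← h1, ← hx, List.mem_flatten]
    simp only [Finset.mem_biUnion, Finset.mem_univ, true_and, List.mem_toFinset]
    constructor
    · rintro ⟨i, hi⟩
      exact ⟨L[i], List.getElem_mem _, hi⟩
    · rintro ⟨l, hl, hx⟩
      obtain ⟨i, hi, rfl⟩ := List.getElem_of_mem hl
      exact ⟨⟨i, hi⟩, hx⟩
  · intro i
    rw [← hget i]
    exact List.toFinset_card_of_nodup (hnd.1 _ (List.getElem_mem _))
  · intro i
    exact PDG.cyc_has (c _ (List.getElem_mem _)) (hnd.1 _ (List.getElem_mem _))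
end
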